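/- Let C be a braided monoidal category, A an object, and s : S ↣ I a subunit. The following are equivalent: (a) s ⊗ id_A : S ⊗ A → I ⊗ A is an isomorphism; (b) there is an isomorphism S ⊗ A ≅ A; (c) there exists an object B and an isomorphism S ⊗ B ≅ A; (d) the identity morphism id_A restricts to s, i.e. id_A factors through λ_A ∘ (s ⊗ id_A) : S ⊗ A → A. -/

import Mathlib

/-!
The objects `X` for which `s ▷ X` is invertible are closed under retracts (naturality of `s ▷ -`),
and they include every `S ⊗ B`, since `s ▷ (S ⊗ B)` is `s ▷ S ▷ B` up to associators. Both (c) and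
(d) exhibit `A` as a retract of some `S ⊗ B`, so each implies (a); the other implications
are immediate from the inverse of `s ▷ A` and the left unitor.
-/

open CategoryTheory MonoidalCategory

theorem isIso_whiskerRight_of_retract {C : Type*} [Category C] [MonoidalCategory C]
    {S T A X : C} (s : S ⟶ T) (i : A ⟶ X) (r : X ⟶ A) (hir : i ≫ r = 𝟙 A)
    [IsIso (s ▷ X)] : IsIso (s ▷ A) := by
  refine ⟨T ◁ i ≫ inv (s ▷ X) ≫ S ◁ r, ?_, ?_⟩
  · rw [← whisker_exchange_assoc, IsIso.hom_inv_id_assoc, ← whiskerLeft_comp, hir,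
      whiskerLeft_id]
  · simp only [Category.assoc]
    rw [whisker_exchange, IsIso.inv_hom_id_assoc, ← whiskerLeft_comp, hir, whiskerLeft_id]

theorem isIso_whiskerRight_tensor {C : Type*} [Category C] [MonoidalCategory C]
    {S T X : C} (s : S ⟶ T) [IsIso (s ▷ X)] (B : C) : IsIso (s ▷ (X ⊗ B)) := by
  rw [whiskerRight_tensor]
  infer_instance

/-- Proposition 4.2 of "Tensor topology": for a subunit `s : S ↣ I` and an object `A`,
the following are equivalent: (a) `s ▷ A` is invertible; (b) `S ⊗ A ≅ A`;
(c) `S ⊗ B ≅ A` for some `B`; (d) `id_A` restricts to `s`. -/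
theorem stmt7 {C : Type*} [Category C] [MonoidalCategory C] [BraidedCategory C]
    {S A : C} (s : S ⟶ 𝟙_ C) [Mono s] (hs : IsIso (s ▷ S)) :
    (IsIso (s ▷ A) ↔ Nonempty (S ⊗ A ≅ A)) ∧
    (Nonempty (S ⊗ A ≅ A) ↔ ∃ B : C, Nonempty (S ⊗ B ≅ A)) ∧
    ((∃ B : C, Nonempty (S ⊗ B ≅ A)) ↔
      ∃ f : A ⟶ S ⊗ A, f ≫ (s ▷ A) ≫ (λ_ A).hom = 𝟙 A) := by
  have hab : IsIso (s ▷ A) → Nonempty (S ⊗ A ≅ A) := fun _ => ⟨asIso (s ▷ A) ≪≫ λ_ A⟩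
  have hbc : Nonempty (S ⊗ A ≅ A) → ∃ B : C, Nonempty (S ⊗ B ≅ A) := fun h => ⟨A, h⟩
  have hca : (∃ B : C, Nonempty (S ⊗ B ≅ A)) → IsIso (s ▷ A) := by
    rintro ⟨B, ⟨e⟩⟩
    have := isIso_whiskerRight_tensor s (X := S) B
    exact isIso_whiskerRight_of_retract s e.inv e.hom e.inv_hom_id
  have had : IsIso (s ▷ A) → ∃ f : A ⟶ S ⊗ A, f ≫ (s ▷ A) ≫ (λ_ A).hom = 𝟙 A :=
    fun _ => ⟨(λ_ A).inv ≫ inv (s ▷ A), by simp⟩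
  have hda : (∃ f : A ⟶ S ⊗ A, f ≫ (s ▷ A) ≫ (λ_ A).hom = 𝟙 A) → IsIso (s ▷ A) := by
    rintro ⟨f, hf⟩
    have := isIso_whiskerRight_tensor s (X := S) A
    exact isIso_whiskerRight_of_retract s f _ hf
  exact ⟨⟨hab, hca ∘ hbc⟩, ⟨hbc, hab ∘ hca⟩, ⟨had ∘ hca, hbc ∘ hab ∘ hda⟩⟩
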